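/- There is a universal constant c > 0 such that for every n ≥ 1, every ε > 0, every f : {0,1}^n → {0,1} that is ε-far from monotone, and every coloring col : S_f⁻ → {red, blue} of the decreasing edges of f, (1/2^n)·Σ_{x ∈ {0,1}^n} √(I⁻_{f,red}(x)) + (1/2^n)·Σ_{y ∈ {0,1}^n} √(I⁻_{f,blue}(y)) ≥ c·ε. -/

import Mathlib

open Finset

attribute [local instance] Classical.propDecidable

variable {n : ℕ}

/-- The edge of the hypercube along dimension `i` at `x` (the pair
`{x^{(i→0)}, x^{(i→1)}}`) is decreasing for `f`. -/
def decEdge (f : (Fin n → Bool) → Bool) (x : Fin n → Bool) (i : Fin n) : Prop :=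
  f (Function.update x i false) = true ∧ f (Function.update x i true) = false

/-- `x` with its `i`-th coordinate flipped. -/
def flipC (x : Fin n → Bool) (i : Fin n) : Fin n → Bool := Function.update x i (!(x i))

/-- `g` is monotone. -/
def monoB (g : (Fin n → Bool) → Bool) : Prop :=
  ∀ x y : Fin n → Bool, (∀ i, x i ≤ y i) → g x ≤ g y

/-- Distance of `f` to the set of monotone functions. -/
noncomputable def distMono (f : (Fin n → Bool) → Bool) : ℝ :=
  sInf {d : ℝ | ∃ g : (Fin n → Bool) → Bool, monoB g ∧
    d = ((univ.filter fun x => f x ≠ g x).card : ℝ) / 2 ^ n}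

/-- `I_f⁻(x)`: the number of decreasing edges of `f` incident on `x`. -/
noncomputable def Iminus (f : (Fin n → Bool) → Bool) (x : Fin n → Bool) : ℕ :=
  (univ.filter fun i => decEdge f x i).card

/-- The number of decreasing edges of `f` (each edge represented by its lower
endpoint together with its dimension). -/
noncomputable def numDecEdges (f : (Fin n → Bool) → Bool) : ℕ :=
  (univ.filter fun q : (Fin n → Bool) × Fin n => q.1 q.2 = false ∧ decEdge f q.1 q.2).card

/-- The event Capture(x, S, f). -/
def Capture (f : (Fin n → Bool) → Bool) (S : Finset (Fin n)) (x : Fin n → Bool) : Prop :=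
  ∃ i ∈ S, decEdge f x i ∧ ∀ j ∈ S \ {i}, ¬ decEdge f (flipC x i) j

/-- Hamming weight of `x` restricted to the coordinates in `M`. -/
noncomputable def wt (M : Finset (Fin n)) (x : Fin n → Bool) : ℕ :=
  (M.filter fun i => x i = true).card

/-- `g` is unate. -/
def unate (g : (Fin n → Bool) → Bool) : Prop :=
  ∃ σ : Fin n → Bool, monoB (fun x => g (fun i => xor (x i) (σ i)))

/-- Distance of `f` to the set of unate functions. -/
noncomputable def distUnate (f : (Fin n → Bool) → Bool) : ℝ :=
  sInf {d : ℝ | ∃ g : (Fin n → Bool) → Bool, unate g ∧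
    d = ((univ.filter fun x => f x ≠ g x).card : ℝ) / 2 ^ n}

/-- `g` is a `k`-junta. -/
def isJunta (k : ℕ) (g : (Fin n → Bool) → Bool) : Prop :=
  ∃ J : Finset (Fin n), J.card ≤ k ∧
    ∀ x y : Fin n → Bool, (∀ i ∈ J, x i = y i) → g x = g y

/-- Distance of `f` to the set of `k`-juntas. -/
noncomputable def distJunta (k : ℕ) (f : (Fin n → Bool) → Bool) : ℝ :=
  sInf {d : ℝ | ∃ g : (Fin n → Bool) → Bool, isJunta k g ∧
    d = ((univ.filter fun x => f x ≠ g x).card : ℝ) / 2 ^ n}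

/-- `I⁻_{f,red}(x)` for the coloring `col` (an edge is identified by its lower
endpoint along its dimension; `col e i = true` means the edge along dimension `i`
at `e` is red). -/
noncomputable def IredCol (f : (Fin n → Bool) → Bool)
    (col : (Fin n → Bool) → Fin n → Bool) (x : Fin n → Bool) : ℕ :=
  if f x = true then
    (univ.filter fun i => decEdge f x i ∧ col (Function.update x i false) i = true).card
  else 0

/-- `I⁻_{f,blue}(x)` for the coloring `col`. -/
noncomputable def IblueCol (f : (Fin n → Bool) → Bool)
    (col : (Fin n → Bool) → Fin n → Bool) (x : Fin n → Bool) : ℕ :=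
  if f x = false then
    (univ.filter fun i => decEdge f x i ∧ col (Function.update x i false) i = false).card
  else 0

/-- `Ψ_M`: the middle layer of the subcube `{0,1}^M`. -/
noncomputable def PsiSet (M : Finset (Fin n)) : Finset (↥M → Bool) :=
  univ.filter fun z => (univ.filter fun i : ↥M => z i = true).card = n / 4

/-- `x` is an erased point (for parameter `κ` and control set `M`). -/
def ErasedPt (κ : ℝ) (M : Finset (Fin n)) (x : Fin n → Bool) : Prop :=
  wt M x = n / 4 ∧ |(wt Mᶜ x : ℝ) - (n : ℝ) / 4| ≤ (n : ℝ) ^ κ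

/-- `Maj(x_{M̄})`: majority on the coordinates outside `M`. -/
noncomputable def MajBar (M : Finset (Fin n)) (x : Fin n → Bool) : Bool :=
  decide (n / 4 < wt Mᶜ x)

/-- `F` is a completion of the `D⁻` instance determined by `(M, P)`. -/
def DminusCompletion (κ : ℝ) (M : Finset (Fin n)) (P : Finset (↥M → Bool))
    (F : (Fin n → Bool) → Bool) : Prop :=
  (∀ x, wt M x < n / 4 → F x = false) ∧
  (∀ x, n / 4 < wt M x → F x = true) ∧
  (∀ x, wt M x = n / 4 → ¬ ErasedPt κ M x →
    F x = if (fun i : ↥M => x i.1) ∈ P then MajBar M x else !(MajBar M x))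

/-- The function `F` of Statement 12: `F(x) = 1` iff `|x_M| > n/4`, or
`|x_M| = n/4` and `x_M ∉ P`. -/
noncomputable def DplusF (M : Finset (Fin n)) (P : Finset (↥M → Bool))
    (x : Fin n → Bool) : Bool :=
  if n / 4 < wt M x then true
  else if wt M x = n / 4 ∧ (fun i : ↥M => x i.1) ∉ P then true
  else false

/-!
Sorting a Boolean function along a direction (rearranging the two values on every edge) never
increases Hamming distances and preserves monotonicity along the other directions. Mark each
decreasing edge, in its direction, at the endpoint to which it is charged. For a fixed direction,
marked values form the chain

  unmarked `false` < marked `false` < marked `true` < unmarked `true`,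

and sorting marked functions by its maximum and minimum keeps every later decrease marked, while
`∑ √#marks` does not increase, because `√` is concave.

Color the directions at random and, at a fixed point, watch the value there after sorting along
one color class: it can change under recoloring a direction only if that direction is marked.
A robust Talagrand inequality on the space of colorings then bounds the variance of this value by
the expected `√#marks`. The color classes have the same distribution, so sorting along any of them
gives nearly the same function `r`. Hence `r` is near functions monotone along each class, and
sorting `r` along all classes in turn reaches a monotone `h` near `r`. What remains is the distance
from `f` to its sorting along one class, which is at most twice the distance to any function
monotone along that class; as only the marks of that color matter for it, a recursion closes.
-/

open Function
open scoped BigOperators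

section Sorting

variable {ι β : Type*} [DecidableEq ι]

/-- The sorting (compression) operator: on every edge in direction `i` the two values of `f` are
rearranged so that the smaller one sits at the lower endpoint. Only the operations `⊔` and `⊓` are
required, so that it acts on `MarkedBit`-valued functions as well as on Boolean ones. -/
def sortAlong [Max β] [Min β] (i : ι) (f : (ι → Bool) → β) (x : ι → Bool) : β :=
  if x i then f (update x i false) ⊔ f (update x i true)
  else f (update x i false) ⊓ f (update x i true)

/-- Sorting along all the directions in `l`, beginning with the last entry of `l`. Sortings along
different directions do not commute, whence a list. -/
def sortList [Max β] [Min β] (l : List ι) (f : (ι → Bool) → β) : (ι → Bool) → β :=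
  l.foldr sortAlong f

/-- `f` is nondecreasing along every edge in direction `i`. -/
def MonotoneAlong [LE β] (i : ι) (f : (ι → Bool) → β) : Prop :=
  ∀ x, f (update x i false) ≤ f (update x i true)

lemma sortAlong_update_of_ne [Max β] [Min β] {i j : ι} (hij : i ≠ j) (f : (ι → Bool) → β)
    (x : ι → Bool) (b : Bool) :
    sortAlong i f (update x j b) = sortAlong i (fun y => f (update y j b)) x := by
  simp only [sortAlong, update_of_ne hij, update_comm hij]

section Lattice

variable [Lattice β] {f : (ι → Bool) → β}

lemma monotoneAlong_sortAlong_self (i : ι) (f : (ι → Bool) → β) :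
    MonotoneAlong i (sortAlong i f) := fun x => by
  simp only [sortAlong, update_self, update_idem, if_true, Bool.false_eq_true, if_false]
  exact inf_le_sup

lemma MonotoneAlong.monotoneAlong_sortAlong {j : ι} (hf : MonotoneAlong j f) (i : ι) :
    MonotoneAlong j (sortAlong i f) := by
  obtain rfl | hij := eq_or_ne i j
  · exact monotoneAlong_sortAlong_self i f
  intro x
  rw [sortAlong_update_of_ne hij, sortAlong_update_of_ne hij]
  unfold sortAlong
  split_ifs
  · exact sup_le_sup (hf _) (hf _)
  · exact inf_le_inf (hf _) (hf _)

lemma MonotoneAlong.sortAlong_eq_self {i : ι} (hf : MonotoneAlong i f) : sortAlong i f = f := by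
  funext x
  rw [sortAlong, sup_eq_right.2 (hf x), inf_eq_left.2 (hf x)]
  conv_rhs => rw [← update_eq_self i x]
  cases x i <;> rfl

lemma MonotoneAlong.monotoneAlong_sortList {j : ι} (hf : MonotoneAlong j f) (l : List ι) :
    MonotoneAlong j (sortList l f) := by
  induction l with
  | nil => exact hf
  | cons i l ih => exact ih.monotoneAlong_sortAlong i

lemma monotoneAlong_sortList_of_mem {l : List ι} (f : (ι → Bool) → β) {j : ι} (hj : j ∈ l) :
    MonotoneAlong j (sortList l f) := by
  induction l with
  | nil => cases hj
  | cons i l ih =>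
    rcases List.mem_cons.1 hj with rfl | hj
    · exact monotoneAlong_sortAlong_self _ _
    · exact (ih hj).monotoneAlong_sortAlong i

lemma sortList_eq_self {l : List ι} (hf : ∀ j ∈ l, MonotoneAlong j f) : sortList l f = f := by
  induction l with
  | nil => rfl
  | cons i l ih =>
    rw [List.forall_mem_cons] at hf
    exact (congrArg (sortAlong i) (ih hf.2)).trans hf.1.sortAlong_eq_self

end Lattice

lemma monotone_of_forall_monotoneAlong [Finite ι] [Preorder β] {f : (ι → Bool) → β}
    (hf : ∀ i, MonotoneAlong i f) : Monotone f := by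
  cases nonempty_fintype ι
  let : LocallyFiniteOrder (ι → Bool) := Fintype.toLocallyFiniteOrder
  refine (monotone_iff_forall_covBy f).2 fun x y hxy => ?_
  obtain ⟨i, b, hb, rfl⟩ := Pi.covBy_iff_exists_right_eq.1 hxy
  obtain ⟨hxi, rfl⟩ : x i = false ∧ b = true := Bool.lt_iff.1 hb.lt
  simpa only [← hxi, update_eq_self] using hf i x

end Sorting

section Contraction

variable {ι : Type*} [Fintype ι] [DecidableEq ι]

lemma two_nsmul_sum_cube {M : Type*} [AddCommMonoid M] (i : ι) (φ : (ι → Bool) → M) :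
    2 • ∑ x, φ x = ∑ x, (φ (update x i false) + φ (update x i true)) := by
  have flip_involutive : Involutive fun x : ι → Bool => update x i (!x i) := fun x => by simp
  rw [two_nsmul]
  nth_rw 2 [← Equiv.sum_comp flip_involutive.toPerm φ]
  rw [← sum_add_distrib]
  refine sum_congr rfl fun x _ => ?_
  change φ x + φ (update x i (!x i)) = _
  nth_rw 1 [← update_eq_self i x]
  cases x i
  · rfl
  · exact add_comm _ _

lemma sum_cube_le_sum_of_edges {M : Type*} [AddCommMonoid M] [LinearOrder M]
    [IsOrderedCancelAddMonoid M] (i : ι) {φ ψ : (ι → Bool) → M}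
    (h : ∀ x, φ (update x i false) + φ (update x i true) ≤
      ψ (update x i false) + ψ (update x i true)) :
    ∑ x, φ x ≤ ∑ x, ψ x := by
  rw [← nsmul_le_nsmul_iff_right two_ne_zero, two_nsmul_sum_cube i φ, two_nsmul_sum_cube i ψ]
  exact sum_le_sum fun x _ => h x

variable (f g : (ι → Bool) → Bool)

lemma hammingDist_sortAlong_le (i : ι) :
    hammingDist (sortAlong i f) (sortAlong i g) ≤ hammingDist f g := by
  simp only [hammingDist, card_filter]
  refine sum_cube_le_sum_of_edges i fun x => ?_
  simp only [sortAlong, update_self, update_idem]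
  generalize f (update x i false) = f₀, f (update x i true) = f₁,
    g (update x i false) = g₀, g (update x i true) = g₁
  revert f₀ f₁ g₀ g₁
  decide

lemma hammingDist_sortList_le (l : List ι) :
    hammingDist (sortList l f) (sortList l g) ≤ hammingDist f g := by
  induction l with
  | nil => exact le_rfl
  | cons i l ih => exact (hammingDist_sortAlong_le _ _ i).trans ih

lemma hammingDist_self_sortList_le {l : List ι} {g : (ι → Bool) → Bool}
    (hg : ∀ j ∈ l, MonotoneAlong j g) :
    hammingDist f (sortList l f) ≤ 2 * hammingDist f g := by
  have contraction := hammingDist_sortList_le g f l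
  rw [sortList_eq_self hg, hammingDist_comm g f] at contraction
  linarith [hammingDist_triangle f g (sortList l f)]

lemma exists_monotoneAlong_of_forall_near {κ : Type*} (L : κ → List ι)
    {g : κ → (ι → Bool) → Bool} (hg : ∀ k, ∀ j ∈ L k, MonotoneAlong j (g k))
    (r : (ι → Bool) → Bool) (T : Finset κ) :
    ∃ h : (ι → Bool) → Bool, (∀ k ∈ T, ∀ j ∈ L k, MonotoneAlong j h) ∧
      hammingDist r h ≤ 2 * ∑ k ∈ T, hammingDist (g k) r := by
  induction T using Finset.induction_on with
  | empty => exact ⟨r, by simp, by simp⟩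
  | insert k T hk ih =>
    obtain ⟨h, h_mono, h_near⟩ := ih
    refine ⟨sortList (L k) h, fun k' hk' j hj => ?_, ?_⟩
    · rcases mem_insert.1 hk' with rfl | hk'
      · exact monotoneAlong_sortList_of_mem h hj
      · exact (h_mono k' hk' j hj).monotoneAlong_sortList _
    · have sort_r := hammingDist_self_sortList_le r (hg k)
      have contraction := hammingDist_sortList_le r h (L k)
      have triangle := hammingDist_triangle r (sortList (L k) r) (sortList (L k) h)
      rw [hammingDist_comm r (g k)] at sort_r
      rw [sum_insert hk]
      linarith

end Contraction

/-- A Boolean value together with a set of marked directions. For a function with values in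
`MarkedBit ι`, the marks at a point are the directions of the decreasing edges charged to it. -/
structure MarkedBit (ι : Type*) where
  value : Bool
  marks : Finset ι

namespace MarkedBit

variable {ι : Type*}

/-- If the value drops from `a` to `b`, then `j` is marked at `a` or at `b`. In the chain order
of `j`-marked bits this only excludes that `a` is an unmarked `true` and `b` an unmarked `false`. -/
def DropMarked (j : ι) (a b : MarkedBit ι) : Prop :=
  a.value = true → b.value = false → j ∈ a.marks ∨ j ∈ b.marks

lemma mem_marks_of_value_ne {j : ι} {a b : MarkedBit ι} (h : DropMarked j a b)
    (h' : DropMarked j b a) (hne : a.value ≠ b.value) : j ∈ a.marks ∨ j ∈ b.marks := by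
  rcases a with ⟨_ | _, A⟩ <;> rcases b with ⟨_ | _, B⟩ <;>
    simp_all [DropMarked, or_comm]

variable [DecidableEq ι]

-- For a fixed direction, `⊔` and `⊓` are the maximum and minimum of the four-element chain
-- unmarked `false` < marked `false` < marked `true` < unmarked `true`.
instance : Max (MarkedBit ι) where
  max
    | ⟨true, A⟩, ⟨true, B⟩ => ⟨true, A ∩ B⟩
    | ⟨true, A⟩, ⟨false, _⟩ => ⟨true, A⟩
    | ⟨false, _⟩, ⟨true, B⟩ => ⟨true, B⟩
    | ⟨false, A⟩, ⟨false, B⟩ => ⟨false, A ∪ B⟩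

instance : Min (MarkedBit ι) where
  min
    | ⟨true, A⟩, ⟨true, B⟩ => ⟨true, A ∪ B⟩
    | ⟨true, _⟩, ⟨false, B⟩ => ⟨false, B⟩
    | ⟨false, A⟩, ⟨true, _⟩ => ⟨false, A⟩
    | ⟨false, A⟩, ⟨false, B⟩ => ⟨false, A ∩ B⟩

lemma value_sup (a b : MarkedBit ι) : (a ⊔ b).value = a.value ⊔ b.value := by
  rcases a with ⟨_ | _, A⟩ <;> rcases b with ⟨_ | _, B⟩ <;> rfl

lemma value_inf (a b : MarkedBit ι) : (a ⊓ b).value = a.value ⊓ b.value := by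
  rcases a with ⟨_ | _, A⟩ <;> rcases b with ⟨_ | _, B⟩ <;> rfl

section DropMarked

variable {j : ι} {a b a' b' : MarkedBit ι}

lemma DropMarked.sup (h : DropMarked j a b) (h' : DropMarked j a' b') :
    DropMarked j (a ⊔ a') (b ⊔ b') := by
  rcases a with ⟨_ | _, A⟩ <;> rcases b with ⟨_ | _, B⟩ <;> rcases a' with ⟨_ | _, A'⟩ <;>
    rcases b' with ⟨_ | _, B'⟩ <;> simp_all [DropMarked, max] <;> tauto

lemma DropMarked.inf (h : DropMarked j a b) (h' : DropMarked j a' b') :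
    DropMarked j (a ⊓ a') (b ⊓ b') := by
  rcases a with ⟨_ | _, A⟩ <;> rcases b with ⟨_ | _, B⟩ <;> rcases a' with ⟨_ | _, A'⟩ <;>
    rcases b' with ⟨_ | _, B'⟩ <;> simp_all [DropMarked, min] <;> tauto

lemma DropMarked.left_inf (h : DropMarked j a b) : DropMarked j a (a ⊓ b) := by
  rcases a with ⟨_ | _, A⟩ <;> rcases b with ⟨_ | _, B⟩ <;> simp_all [DropMarked, min]

lemma dropMarked_inf_left (j : ι) (a b : MarkedBit ι) : DropMarked j (a ⊓ b) a := by
  rcases a with ⟨_ | _, A⟩ <;> rcases b with ⟨_ | _, B⟩ <;> simp [DropMarked, min]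

lemma DropMarked.sup_right (h : DropMarked j a b) : DropMarked j (a ⊔ b) b := by
  rcases a with ⟨_ | _, A⟩ <;> rcases b with ⟨_ | _, B⟩ <;> simp_all [DropMarked, max]

lemma dropMarked_right_sup (j : ι) (a b : MarkedBit ι) : DropMarked j b (a ⊔ b) := by
  rcases a with ⟨_ | _, A⟩ <;> rcases b with ⟨_ | _, B⟩ <;> simp [DropMarked, max]

end DropMarked

end MarkedBit

section MarkedSorting

open MarkedBit

variable {ι : Type*} [DecidableEq ι]

lemma value_sortList (l : List ι) (M : (ι → Bool) → MarkedBit ι) (x : ι → Bool) :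
    (sortList l M x).value = sortList l (fun y => (M y).value) x := by
  induction l generalizing x with
  | nil => rfl
  | cons i l ih =>
    change (sortAlong i (sortList l M) x).value = sortAlong i (sortList l _) x
    unfold sortAlong
    split_ifs
    · rw [value_sup, ih, ih]
    · rw [value_inf, ih, ih]

/-- Every decreasing edge of `M` in direction `j` carries the mark `j` at one of its endpoints. -/
def DropsMarkedAlong (j : ι) (M : (ι → Bool) → MarkedBit ι) : Prop :=
  ∀ x, DropMarked j (M (update x j false)) (M (update x j true))

section DropMarked

variable {j : ι} {M N : (ι → Bool) → MarkedBit ι}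

lemma dropMarked_sortAlong (h : ∀ x, DropMarked j (M x) (N x)) (i : ι) (x : ι → Bool) :
    DropMarked j (sortAlong i M x) (sortAlong i N x) := by
  unfold sortAlong
  split_ifs
  · exact (h _).sup (h _)
  · exact (h _).inf (h _)

lemma dropMarked_sortList (h : ∀ x, DropMarked j (M x) (N x)) (l : List ι) (x : ι → Bool) :
    DropMarked j (sortList l M x) (sortList l N x) := by
  induction l generalizing x with
  | nil => exact h x
  | cons i l ih => exact dropMarked_sortAlong ih i x

lemma DropsMarkedAlong.dropsMarkedAlong_sortList {l : List ι} (h : DropsMarkedAlong j M)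
    (hj : j ∉ l) : DropsMarkedAlong j (sortList l M) := by
  induction l with
  | nil => exact h
  | cons i l ih =>
    rw [List.mem_cons, not_or] at hj
    intro x
    change DropMarked j (sortAlong i (sortList l M) _) (sortAlong i (sortList l M) _)
    rw [sortAlong_update_of_ne (Ne.symm hj.1), sortAlong_update_of_ne (Ne.symm hj.1)]
    exact dropMarked_sortAlong (ih hj.2) i x

lemma DropsMarkedAlong.dropMarked_sortAlong_right (h : DropsMarkedAlong j M) (x : ι → Bool) :
    DropMarked j (M x) (sortAlong j M x) := by
  have hMx : M x = M (update x j (x j)) := by rw [update_eq_self]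
  rw [hMx, sortAlong]
  cases x j
  · exact (h x).left_inf
  · exact dropMarked_right_sup _ _ _

lemma DropsMarkedAlong.dropMarked_sortAlong_left (h : DropsMarkedAlong j M) (x : ι → Bool) :
    DropMarked j (sortAlong j M x) (M x) := by
  have hMx : M x = M (update x j (x j)) := by rw [update_eq_self]
  rw [hMx, sortAlong]
  cases x j
  · exact dropMarked_inf_left _ _ _
  · exact (h x).sup_right

lemma DropsMarkedAlong.mem_marks_sortList_append_cons {s t : List ι} (h : DropsMarkedAlong j M)
    (hj : j ∉ t) (x : ι → Bool)
    (hne : (sortList (s ++ j :: t) M x).value ≠ (sortList (s ++ t) M x).value) :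
    j ∈ (sortList (s ++ j :: t) M x).marks ∨ j ∈ (sortList (s ++ t) M x).marks := by
  have ht : DropsMarkedAlong j (sortList t M) := h.dropsMarkedAlong_sortList hj
  simp only [sortList, List.foldr_append] at hne ⊢
  exact mem_marks_of_value_ne (dropMarked_sortList ht.dropMarked_sortAlong_left s x)
    (dropMarked_sortList ht.dropMarked_sortAlong_right s x) hne

lemma mem_marks_sortList_filter {l : List ι} (hl : l.Nodup) (h : ∀ i ∈ l, DropsMarkedAlong i M)
    {p q : ι → Bool} (hpq : ∀ i, i ≠ j → p i = q i) (x : ι → Bool)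
    (hne : (sortList (l.filter p) M x).value ≠ (sortList (l.filter q) M x).value) :
    j ∈ (sortList (l.filter p) M x).marks ∨ j ∈ (sortList (l.filter q) M x).marks := by
  have filter_congr_of_notMem {s : List ι} (hs : j ∉ s) : s.filter p = s.filter q :=
    List.filter_congr fun i hi => hpq i (ne_of_mem_of_not_mem hi hs)
  by_cases hj : j ∈ l
  swap
  · exact absurd (by rw [filter_congr_of_notMem hj]) hne
  obtain ⟨s, t, rfl⟩ := List.append_of_mem hj
  have hjs : j ∉ s := fun hjs => (List.disjoint_of_nodup_append hl) hjs List.mem_cons_self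
  have hjt : j ∉ t := (List.nodup_cons.1 hl.of_append_right).1
  have ht : j ∉ t.filter q := fun hjt' => hjt (List.mem_of_mem_filter hjt')
  simp only [List.filter_append, List.filter_cons, filter_congr_of_notMem hjs,
    filter_congr_of_notMem hjt] at hne ⊢
  cases hp : p j <;> cases hq : q j <;> simp only [hp, hq, if_true, Bool.false_eq_true, if_false,
    ne_eq, not_true_eq_false] at hne ⊢
  · exact ((h j hj).mem_marks_sortList_append_cons ht x (Ne.symm hne)).symm
  · exact (h j hj).mem_marks_sortList_append_cons ht x hne

end DropMarked

lemma sqrt_card_inter_add_sqrt_card_union_le (A B : Finset ι) :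
    √(#(A ∩ B)) + √(#(A ∪ B)) ≤ √(#A) + √(#B) := by
  have h_add : (#(A ∩ B) : ℝ) + #(A ∪ B) = #A + #B := mod_cast card_inter_add_card_union A B
  have hA : (#(A ∩ B) : ℝ) ≤ #A := mod_cast card_le_card inter_subset_left
  have hB : (#(A ∩ B) : ℝ) ≤ #B := mod_cast card_le_card inter_subset_right
  have h_mul : √(#(A ∩ B)) * √(#(A ∪ B)) ≤ √(#A) * √(#B) := by
    rw [← Real.sqrt_mul (by positivity), ← Real.sqrt_mul (by positivity)]
    exact Real.sqrt_le_sqrt (by nlinarith)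
  refine (pow_le_pow_iff_left₀ (by positivity) (by positivity) two_ne_zero).1 ?_
  simp only [add_sq, Nat.cast_nonneg, Real.sq_sqrt]
  linarith

lemma MarkedBit.sqrt_card_marks_inf_add_sup_le (a b : MarkedBit ι) :
    √(#(a ⊓ b).marks) + √(#(a ⊔ b).marks) ≤ √(#a.marks) + √(#b.marks) := by
  rcases a with ⟨_ | _, A⟩ <;> rcases b with ⟨_ | _, B⟩
  · exact sqrt_card_inter_add_sqrt_card_union_le A B
  · exact le_rfl
  · exact (add_comm _ _).le
  · rw [add_comm]
    exact sqrt_card_inter_add_sqrt_card_union_le A B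

variable [Fintype ι] (M : (ι → Bool) → MarkedBit ι)

lemma sum_sqrt_card_marks_sortAlong_le (i : ι) :
    ∑ x, √(#(sortAlong i M x).marks) ≤ ∑ x, √(#(M x).marks) := by
  refine sum_cube_le_sum_of_edges i fun x => ?_
  simp only [sortAlong, update_self, update_idem, if_true, Bool.false_eq_true, if_false]
  exact sqrt_card_marks_inf_add_sup_le _ _

lemma sum_sqrt_card_marks_sortList_le (l : List ι) :
    ∑ x, √(#(sortList l M x).marks) ≤ ∑ x, √(#(M x).marks) := by
  induction l with
  | nil => exact le_rfl
  | cons i l ih => exact (sum_sqrt_card_marks_sortAlong_le _ i).trans ih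

end MarkedSorting

section Talagrand

/-- The probability that `h ω = true` for `ω` uniformly distributed in the finite type `Ω`. -/
noncomputable def probTrue {Ω : Type*} [Fintype Ω] (h : Ω → Bool) : ℝ :=
  𝔼 ω, if h ω = true then 1 else 0

section ProbTrue

variable {Ω : Type*} [Fintype Ω] (h : Ω → Bool)

lemma probTrue_nonneg : 0 ≤ probTrue h :=
  expect_nonneg fun _ _ => by positivity

lemma probTrue_not [Nonempty Ω] : probTrue (fun ω => !h ω) = 1 - probTrue h := by
  rw [probTrue, probTrue, ← Fintype.expect_const (ι := Ω) (1 : ℝ), ← expect_sub_distrib]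
  refine expect_congr rfl fun ω _ => ?_
  cases h ω <;> simp

lemma probTrue_le_one : probTrue h ≤ 1 := by
  cases isEmpty_or_nonempty Ω
  · simp [probTrue]
  · linarith [probTrue_not h, probTrue_nonneg fun ω => !h ω]

lemma probTrue_comp_equiv {Ω' : Type*} [Fintype Ω'] (e : Ω' ≃ Ω) :
    probTrue (fun ω => h (e ω)) = probTrue h :=
  Fintype.expect_equiv e _ _ fun _ => rfl

lemma abs_probTrue_sub_probTrue_le {g h a b : Ω → Bool}
    (hne : ∀ ω, g ω ≠ h ω → a ω = true ∨ b ω = true) :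
    |probTrue g - probTrue h| ≤ probTrue a + probTrue b := by
  simp only [probTrue]
  rw [← expect_sub_distrib, ← expect_add_distrib]
  refine (abs_expect_le _ _).trans (expect_le_expect fun ω _ => ?_)
  have hω := hne ω
  clear hne
  generalize g ω = g, h ω = h, a ω = a, b ω = b at *
  cases g <;> cases h <;> cases a <;> cases b <;> simp_all

lemma probTrue_bne_majority_le [Nonempty Ω] :
    probTrue (fun ω => h ω != decide (1 / 2 ≤ probTrue h)) ≤
      2 * (probTrue h * (1 - probTrue h)) := by
  have h₀ := probTrue_nonneg h
  have h₁ := probTrue_le_one h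
  by_cases majority : 1 / 2 ≤ probTrue h
  · simp only [majority, decide_true, Bool.bne_true, probTrue_not]
    nlinarith
  · simp only [majority, decide_false, Bool.bne_false]
    nlinarith

end ProbTrue

lemma expect_fin_succ {α : Type*} [Fintype α] {m : ℕ} (F : (Fin (m + 1) → α) → ℝ) :
    𝔼 c, F c = 𝔼 v : α, 𝔼 c : Fin m → α, F (Fin.cons v c) := by
  rw [← expect_product' univ univ fun v c => F (Fin.cons v c), univ_product_univ]
  exact (Fintype.expect_equiv (Fin.consEquiv fun _ => α) _ _ fun _ => rfl).symm

lemma sqrt_sq_expect_add_sq_expect_le {Ω : Type*} [Fintype Ω] (u d : Ω → ℝ) :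
    √((𝔼 ω, u ω) ^ 2 + (𝔼 ω, d ω) ^ 2) ≤ 𝔼 ω, √(u ω ^ 2 + d ω ^ 2) := by
  have norm_mk (a b : ℝ) : ‖(⟨a, b⟩ : ℂ)‖ = √(a ^ 2 + b ^ 2) := by
    rw [Complex.norm_def, Complex.normSq_mk, ← sq, ← sq]
  have expect_mk : 𝔼 ω, (⟨u ω, d ω⟩ : ℂ) = ⟨𝔼 ω, u ω, 𝔼 ω, d ω⟩ :=
    Complex.ext (map_expect (Complex.reLm.restrictScalars ℚ≥0) _ _)
      (map_expect (Complex.imLm.restrictScalars ℚ≥0) _ _)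
  simpa only [expect_mk, norm_mk] using
    RCLike.norm_expect_le (K := ℂ) (s := univ) (f := fun ω => (⟨u ω, d ω⟩ : ℂ))

section Tensorization

variable {α : Type*} [Fintype α]

lemma expect_sq_sub_sq_expect_le [Nonempty α] {p d : α → ℝ} (hd : ∀ v, 0 ≤ d v)
    (hpd : ∀ v w, |p v - p w| ≤ d v + d w) :
    (𝔼 v, p v ^ 2) - (𝔼 v, p v) ^ 2 ≤ (Fintype.card α * 𝔼 v, d v) ^ 2 := by
  obtain ⟨w⟩ := ‹Nonempty α›
  have sq_sub_le (v : α) : (p v - p w) ^ 2 ≤ (∑ v, d v) ^ 2 := by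
    refine sq_le_sq.2 ((?_ : |p v - p w| ≤ ∑ v, d v).trans (le_abs_self _))
    obtain rfl | hvw := eq_or_ne v w
    · simpa using sum_nonneg fun v _ => hd v
    · calc |p v - p w| ≤ d v + d w := hpd v w
        _ = ∑ u ∈ {v, w}, d u := (sum_pair hvw).symm
        _ ≤ ∑ u, d u := sum_le_univ_sum_of_nonneg hd
  have deviation : 𝔼 v, (p v - p w) ^ 2 = (𝔼 v, p v ^ 2) - 2 * (𝔼 v, p v) * p w + p w ^ 2 := by
    simp only [sub_sq, expect_add_distrib, expect_sub_distrib, ← expect_mul, ← mul_expect,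
      Fintype.expect_const]
  have deviation_le : 𝔼 v, (p v - p w) ^ 2 ≤ (∑ v, d v) ^ 2 :=
    expect_le ⟨w, mem_univ w⟩ fun v _ => sq_sub_le v
  rw [← nsmul_eq_mul, Fintype.card_smul_expect]
  linarith [sq_nonneg ((𝔼 v, p v) - p w)]

lemma le_sqrt_sq_add_sq {s t a b : ℝ} (hs : s + t ≤ 1 / 4) (hs₀ : 0 ≤ s) (ht₀ : 0 ≤ t)
    (hsa : s ≤ a) (htb : t ≤ b ^ 2) : s + t ≤ √(a ^ 2 + b ^ 2) := by
  refine Real.le_sqrt_of_sq_le ?_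
  nlinarith [pow_le_pow_left₀ hs₀ hsa 2]

lemma expect_mul_one_sub_expect_le [Nonempty α] {p u d : α → ℝ} (hp₀ : ∀ v, 0 ≤ p v)
    (hp₁ : ∀ v, p v ≤ 1) (hd : ∀ v, 0 ≤ d v) (hpd : ∀ v w, |p v - p w| ≤ d v + d w)
    (hpu : ∀ v, p v * (1 - p v) ≤ Fintype.card α * u v) :
    (𝔼 v, p v) * (1 - 𝔼 v, p v) ≤ Fintype.card α * 𝔼 v, √(u v ^ 2 + d v ^ 2) := by
  have conditional : 𝔼 v, p v * (1 - p v) = (𝔼 v, p v) - 𝔼 v, p v ^ 2 := by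
    simp only [mul_sub, mul_one, expect_sub_distrib, sq]
  have conditional_le : 𝔼 v, p v * (1 - p v) ≤ Fintype.card α * 𝔼 v, u v := by
    rw [mul_expect]
    exact expect_le_expect fun v _ => hpu v
  have conditional_nonneg : 0 ≤ 𝔼 v, p v * (1 - p v) :=
    expect_nonneg fun v _ => mul_nonneg (hp₀ v) (sub_nonneg.2 (hp₁ v))
  have variance_nonneg : 0 ≤ (𝔼 v, p v ^ 2) - (𝔼 v, p v) ^ 2 := by
    simpa using expect_mul_sq_le_sq_mul_sq univ p 1
  calc (𝔼 v, p v) * (1 - 𝔼 v, p v)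
      = 𝔼 v, p v * (1 - p v) + ((𝔼 v, p v ^ 2) - (𝔼 v, p v) ^ 2) := by rw [conditional]; ring
    _ ≤ √((Fintype.card α * 𝔼 v, u v) ^ 2 + (Fintype.card α * 𝔼 v, d v) ^ 2) := by
      refine le_sqrt_sq_add_sq ?_ conditional_nonneg variance_nonneg conditional_le
        (expect_sq_sub_sq_expect_le hd hpd)
      linarith [sq_nonneg ((𝔼 v, p v) - 1 / 2)]
    _ = Fintype.card α * √((𝔼 v, u v) ^ 2 + (𝔼 v, d v) ^ 2) := by
      rw [mul_pow, mul_pow, ← mul_add, Real.sqrt_mul (by positivity),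
        Real.sqrt_sq (Nat.cast_nonneg _)]
    _ ≤ Fintype.card α * 𝔼 v, √(u v ^ 2 + d v ^ 2) :=
      mul_le_mul_of_nonneg_left (sqrt_sq_expect_add_sq_expect_le u d) (Nat.cast_nonneg _)

lemma card_eq_sq_sqrt_card_succ_add {m : ℕ} (s : Finset (Fin (m + 1))) :
    (#s : ℝ) = √(#{j : Fin m | j.succ ∈ s}) ^ 2 + (if decide (0 ∈ s) = true then 1 else 0) ^ 2 := by
  have card_eq := Fin.card_filter_univ_succ (· ∈ s)
  rw [filter_univ_mem] at card_eq
  rw [card_eq, Real.sq_sqrt (Nat.cast_nonneg _)]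
  by_cases h0 : 0 ∈ s <;> simp [h0, add_comm]

-- The variance of `h` is the mean of its variances on the fibers over the first coordinate plus
-- the variance of the fiber means. The marks on the remaining coordinates bound the former, those
-- on the first coordinate the latter, and Minkowski's inequality recombines the two bounds.
lemma robust_talagrand_fin [Nonempty α] {m : ℕ} {h : (Fin m → α) → Bool}
    {R : (Fin m → α) → Finset (Fin m)}
    (hR : ∀ c j v, h c ≠ h (update c j v) → j ∈ R c ∨ j ∈ R (update c j v)) :
    probTrue h * (1 - probTrue h) ≤ Fintype.card α * 𝔼 c, √(#(R c)) := by
  induction m with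
  | zero =>
    refine le_of_eq_of_le ?_ (by positivity : (0 : ℝ) ≤ _)
    have h_const : probTrue h = if h default = true then 1 else 0 := by
      rw [probTrue, univ_unique, expect_singleton]
    rw [h_const]
    split_ifs <;> norm_num
  | succ m ih =>
    let tail (v : α) (c : Fin m → α) : Finset (Fin m) := {j | j.succ ∈ R (Fin.cons v c)}
    let head (v : α) (c : Fin m → α) : Bool := decide (0 ∈ R (Fin.cons v c))
    have fiber (v : α) : probTrue (fun c => h (Fin.cons v c)) *
        (1 - probTrue (fun c => h (Fin.cons v c))) ≤ Fintype.card α * 𝔼 c, √(#(tail v c)) := by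
      refine ih fun c j w hne => ?_
      simp only [tail, mem_filter_univ, Fin.cons_update] at hne ⊢
      exact hR _ _ _ hne
    have head_sensitive (v w : α) :
        |probTrue (fun c => h (Fin.cons v c)) - probTrue (fun c => h (Fin.cons w c))| ≤
          probTrue (head v) + probTrue (head w) := by
      refine abs_probTrue_sub_probTrue_le fun c hne => ?_
      simp only [head, decide_eq_true_eq]
      rw [← Fin.update_cons_zero (α := fun _ => α) v c w] at hne ⊢
      exact hR _ _ _ hne
    have probTrue_eq : probTrue h = 𝔼 v, probTrue (fun c => h (Fin.cons v c)) := expect_fin_succ _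
    rw [probTrue_eq, expect_fin_succ]
    refine (expect_mul_one_sub_expect_le (fun v => probTrue_nonneg _) (fun v => probTrue_le_one _)
      (fun v => probTrue_nonneg _) head_sensitive fiber).trans ?_
    refine mul_le_mul_of_nonneg_left (expect_le_expect fun v _ => ?_) (Nat.cast_nonneg _)
    simp only [card_eq_sq_sqrt_card_succ_add (R (Fin.cons v _))]
    exact sqrt_sq_expect_add_sq_expect_le _ _

theorem robust_talagrand {ι : Type*} [Fintype ι] [DecidableEq ι] [Nonempty α] {h : (ι → α) → Bool}
    {R : (ι → α) → Finset ι}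
    (hR : ∀ c j v, h c ≠ h (update c j v) → j ∈ R c ∨ j ∈ R (update c j v)) :
    probTrue h * (1 - probTrue h) ≤ Fintype.card α * 𝔼 c, √(#(R c)) := by
  let e := Fintype.equivFin ι
  let E : (Fin (Fintype.card ι) → α) ≃ (ι → α) := e.symm.arrowCongr (Equiv.refl α)
  have E_update (c : Fin (Fintype.card ι) → α) (j v) :
      E (update c j v) = update (E c) (e.symm j) v := by
    change update c j v ∘ e = update (c ∘ e) (e.symm j) v
    exact update_comp_equiv c e j v
  have transported := robust_talagrand_fin (h := fun c => h (E c))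
    (R := fun c => (R (E c)).map e.toEmbedding) fun c j v hne => by
      simp only [mem_map_equiv, E_update] at hne ⊢
      exact hR _ _ _ hne
  have expect_eq : 𝔼 c, √(#(R (E c))) = 𝔼 c, √(#(R c)) := Fintype.expect_equiv E _ _ fun _ => rfl
  simpa only [card_map, probTrue_comp_equiv, expect_eq] using transported

end Tensorization

end Talagrand

section Coloring

variable {ι α : Type*} [DecidableEq α]

/-- The directions of `l` that receive the color `k` under the coloring `c`, in the order of `l`. -/
def colorClass (l : List ι) (c : ι → α) (k : α) : List ι :=
  l.filter fun i => c i = k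

lemma mem_colorClass {l : List ι} {c : ι → α} {k : α} {i : ι} :
    i ∈ colorClass l c k ↔ i ∈ l ∧ c i = k := by
  simp only [colorClass, List.mem_filter, decide_eq_true_eq]

lemma length_colorClass_lt_of_forall_ne_nil [Nontrivial α] {l : List ι} {c : ι → α}
    (h : ∀ k, colorClass l c k ≠ []) (k : α) : (colorClass l c k).length < l.length := by
  obtain ⟨k', hk'⟩ := exists_ne k
  obtain ⟨i, hi⟩ := List.exists_mem_of_ne_nil _ (h k')
  rw [mem_colorClass] at hi
  refine List.length_filter_lt_length_iff_exists.2 ⟨i, hi.1, ?_⟩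
  simpa only [hi.2, decide_eq_true_eq] using hk'

lemma dropsMarkedAlong_filter_marks [DecidableEq ι] {l : List ι} {M : (ι → Bool) → MarkedBit ι}
    {c : ι → α} {k : α} {i : ι} (hM : ∀ i ∈ l, DropsMarkedAlong i M) (hi : i ∈ colorClass l c k) :
    DropsMarkedAlong i fun x => ⟨(M x).value, {i ∈ (M x).marks | c i = k}⟩ := by
  intro x hx hx'
  rw [mem_colorClass] at hi
  simpa only [mem_filter, hi.2, and_true] using hM i hi.1 x hx hx'

variable [Fintype α]

lemma sum_sqrt_card_filter_le (c : ι → α) (T : Finset ι) :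
    ∑ k, √(#{i ∈ T | c i = k}) ≤ √(Fintype.card α) * √(#T) := by
  have card_T : (#T : ℝ) = ∑ k, (#{i ∈ T | c i = k} : ℝ) :=
    mod_cast card_eq_sum_card_fiberwise fun i _ => mem_coe.2 (mem_univ (c i))
  simpa [card_T] using Real.sum_sqrt_mul_sqrt_le univ (fun _ : α => zero_le_one)
    fun k => (#{i ∈ T | c i = k}).cast_nonneg (α := ℝ)

lemma sum_sum_sqrt_card_filter_le {X : Type*} [Fintype X] (c : ι → α) (T : X → Finset ι) :
    ∑ k, ∑ x, √(#{i ∈ T x | c i = k}) ≤ √(Fintype.card α) * ∑ x, √(#(T x)) := by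
  rw [sum_comm, mul_sum]
  exact sum_le_sum fun x _ => sum_sqrt_card_filter_le c (T x)

variable [Fintype ι] [DecidableEq ι]

lemma expect_colorClass_congr {l : List ι} (F : List ι → ℝ) (k k' : α) :
    𝔼 c : ι → α, F (colorClass l c k) = 𝔼 c : ι → α, F (colorClass l c k') := by
  refine Fintype.expect_equiv ((Equiv.refl ι).arrowCongr (Equiv.swap k k')) _ _ fun c => ?_
  simp [colorClass, Equiv.swap_apply_eq_iff]

lemma expect_hammingDist_eq_sum_probTrue {Ω X : Type*} [Fintype Ω] [Fintype X] (F : Ω → X → Bool)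
    (r : X → Bool) :
    𝔼 ω, (hammingDist (F ω) r : ℝ) = ∑ x, probTrue fun ω => F ω x != r x := by
  simp only [probTrue, ← expect_sum_comm, hammingDist, card_filter, Nat.cast_sum, Nat.cast_ite,
    Nat.cast_one, Nat.cast_zero, bne_iff_ne]

section RandomSorting

variable [Nonempty α] {l : List ι} {M : (ι → Bool) → MarkedBit ι}

lemma probTrue_sortList_colorClass_bne_majority_le (hl : l.Nodup)
    (hM : ∀ i ∈ l, DropsMarkedAlong i M) (k : α) (x : ι → Bool) :
    probTrue (fun c : ι → α => (sortList (colorClass l c k) M x).value !=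
        decide (1 / 2 ≤ probTrue fun c : ι → α => (sortList (colorClass l c k) M x).value)) ≤
      2 * Fintype.card α * 𝔼 c : ι → α, √(#(sortList (colorClass l c k) M x).marks) := by
  refine (probTrue_bne_majority_le _).trans ?_
  rw [mul_assoc]
  refine mul_le_mul_of_nonneg_left (robust_talagrand fun c j v hne => ?_) zero_le_two
  refine mem_marks_sortList_filter hl hM (fun i hij => ?_) x hne
  rw [update_of_ne hij]

lemma exists_forall_expect_hammingDist_sortList_le (hl : l.Nodup)
    (hM : ∀ i ∈ l, DropsMarkedAlong i M) :
    ∃ r : (ι → Bool) → Bool, ∀ k : α,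
      𝔼 c : ι → α, (hammingDist (sortList (colorClass l c k) fun x => (M x).value) r : ℝ) ≤
        2 * Fintype.card α * ∑ x, √(#(M x).marks) := by
  obtain ⟨k₀⟩ := ‹Nonempty α›
  let p (k : α) (x : ι → Bool) : ℝ :=
    probTrue fun c : ι → α => (sortList (colorClass l c k) M x).value
  have p_eq (k : α) (x : ι → Bool) : p k₀ x = p k x :=
    expect_colorClass_congr (fun s => if (sortList s M x).value = true then 1 else 0) k₀ k
  refine ⟨fun x => decide (1 / 2 ≤ p k₀ x), fun k => ?_⟩
  rw [expect_hammingDist_eq_sum_probTrue]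
  calc ∑ x, probTrue (fun c : ι → α =>
        (sortList (colorClass l c k) fun x => (M x).value) x != decide (1 / 2 ≤ p k₀ x))
      ≤ ∑ x, 2 * Fintype.card α * 𝔼 c : ι → α, √(#(sortList (colorClass l c k) M x).marks) := by
        simp only [← value_sortList, p_eq k]
        exact sum_le_sum fun x _ => probTrue_sortList_colorClass_bne_majority_le hl hM k x
    _ = 2 * Fintype.card α *
          𝔼 c : ι → α, ∑ x, √(#(sortList (colorClass l c k) M x).marks) := by
        rw [← mul_sum, expect_sum_comm]
    _ ≤ 2 * Fintype.card α * ∑ x, √(#(M x).marks) :=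
        mul_le_mul_of_nonneg_left
          (expect_le univ_nonempty fun c _ => sum_sqrt_card_marks_sortList_le M _) (by positivity)

lemma exists_coloring_sum_hammingDist_sortList_le (hl : l.Nodup)
    (hM : ∀ i ∈ l, DropsMarkedAlong i M) :
    ∃ (c : ι → α) (r : (ι → Bool) → Bool),
      ∑ k, (hammingDist (sortList (colorClass l c k) fun x => (M x).value) r : ℝ) ≤
        2 * Fintype.card α ^ 2 * ∑ x, √(#(M x).marks) := by
  obtain ⟨r, hr⟩ := exists_forall_expect_hammingDist_sortList_le (α := α) hl hM
  have expect_sum_le : 𝔼 c : ι → α,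
      ∑ k, (hammingDist (sortList (colorClass l c k) fun x => (M x).value) r : ℝ) ≤
        2 * Fintype.card α ^ 2 * ∑ x, √(#(M x).marks) := by
    rw [expect_sum_comm]
    refine (sum_le_card_nsmul _ _ _ fun k _ => hr k).trans_eq ?_
    rw [card_univ, nsmul_eq_mul]
    ring
  obtain ⟨c, -, hc⟩ := exists_le_of_expect_le univ_nonempty expect_sum_le
  exact ⟨c, r, hc⟩

lemma exists_coloring_exists_monotoneAlong (hl : l.Nodup) (hM : ∀ i ∈ l, DropsMarkedAlong i M) :
    ∃ (c : ι → α) (h : (ι → Bool) → Bool), (∀ j ∈ l, MonotoneAlong j h) ∧ ∀ k,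
      (hammingDist (fun x => (M x).value) h : ℝ) ≤
        hammingDist (fun x => (M x).value) (sortList (colorClass l c k) fun x => (M x).value) +
          6 * Fintype.card α ^ 2 * ∑ x, √(#(M x).marks) := by
  obtain ⟨c, r, hr⟩ := exists_coloring_sum_hammingDist_sortList_le (α := α) hl hM
  set f : (ι → Bool) → Bool := fun x => (M x).value
  obtain ⟨h, h_mono, h_near⟩ := exists_monotoneAlong_of_forall_near (colorClass l c)
    (fun k j hj => monotoneAlong_sortList_of_mem f hj) r univ
  refine ⟨c, h, fun j hj => h_mono (c j) (mem_univ _) j (mem_colorClass.2 ⟨hj, rfl⟩), fun k => ?_⟩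
  have triangle : (hammingDist f h : ℝ) ≤ hammingDist f (sortList (colorClass l c k) f) +
      (hammingDist (sortList (colorClass l c k) f) r + hammingDist r h) :=
    mod_cast (hammingDist_triangle _ _ _).trans (by gcongr; exact hammingDist_triangle _ _ _)
  have color_le : (hammingDist (sortList (colorClass l c k) f) r : ℝ) ≤
      ∑ k, (hammingDist (sortList (colorClass l c k) f) r : ℝ) :=
    single_le_sum (f := fun k => (hammingDist (sortList (colorClass l c k) f) r : ℝ))
      (fun k _ => Nat.cast_nonneg _) (mem_univ k)
  have near : (hammingDist r h : ℝ) ≤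
      2 * ∑ k, (hammingDist (sortList (colorClass l c k) f) r : ℝ) := mod_cast h_near
  linarith

end RandomSorting

-- With sixteen colors, replacing the marks by those of a single color costs a factor
-- `√16 / 16 = 1 / 4` on average, which beats the factor `2` of `hammingDist_self_sortList_le`.
-- The constant solves `C = 2 * C / 4 + 6 * 16 ^ 2`.
theorem exists_monotoneAlong_hammingDist_le {l : List ι} {M : (ι → Bool) → MarkedBit ι}
    (hl : l.Nodup) (hM : ∀ i ∈ l, DropsMarkedAlong i M) :
    ∃ h : (ι → Bool) → Bool, (∀ j ∈ l, MonotoneAlong j h) ∧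
      (hammingDist (fun x => (M x).value) h : ℝ) ≤ 3072 * ∑ x, √(#(M x).marks) := by
  induction hlen : l.length using Nat.strong_induction_on generalizing l M with
  | _ m ih =>
    obtain ⟨c, h, h_mono, h_near⟩ := exists_coloring_exists_monotoneAlong (α := Fin 16) hl hM
    refine ⟨h, h_mono, ?_⟩
    rw [Fintype.card_fin, Nat.cast_ofNat] at h_near
    by_cases empty : ∃ k, colorClass l c k = []
    · obtain ⟨k, hk⟩ := empty
      have unsorted := h_near k
      rw [hk, sortList, List.foldr_nil, hammingDist_self, Nat.cast_zero] at unsorted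
      have : 0 ≤ ∑ x, √(#(M x).marks) := by positivity
      linarith
    have recursion (k : Fin 16) :
        (hammingDist (fun x => (M x).value)
          (sortList (colorClass l c k) fun x => (M x).value) : ℝ) ≤
        2 * (3072 * ∑ x, √(#{i ∈ (M x).marks | c i = k})) := by
      have shorter := length_colorClass_lt_of_forall_ne_nil (not_exists.1 empty) k
      obtain ⟨g, g_mono, g_near⟩ := ih _ (hlen ▸ shorter) (hl.filter _)
        (fun i hi => dropsMarkedAlong_filter_marks hM hi) rfl
      refine le_trans ?_ (mul_le_mul_of_nonneg_left g_near zero_le_two)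
      exact_mod_cast hammingDist_self_sortList_le (fun x => (M x).value) g_mono
    have split := sum_sum_sqrt_card_filter_le c fun x => (M x).marks
    rw [Fintype.card_fin, show ((16 : ℕ) : ℝ) = 4 ^ 2 by norm_num,
      Real.sqrt_sq zero_le_four] at split
    have average := sum_le_sum fun k (_ : k ∈ univ) =>
      (h_near k).trans (add_le_add_left (recursion k) _)
    simp only [sum_const, card_univ, Fintype.card_fin, nsmul_eq_mul, sum_add_distrib, ← mul_sum,
      Nat.cast_ofNat] at average
    linarith

theorem exists_monotone_hammingDist_le {M : (ι → Bool) → MarkedBit ι}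
    (hM : ∀ i, DropsMarkedAlong i M) :
    ∃ h : (ι → Bool) → Bool, Monotone h ∧
      (hammingDist (fun x => (M x).value) h : ℝ) ≤ 3072 * ∑ x, √(#(M x).marks) := by
  obtain ⟨h, h_mono, h_near⟩ :=
    exists_monotoneAlong_hammingDist_le (nodup_toList univ) fun i _ => hM i
  exact ⟨h, monotone_of_forall_monotoneAlong fun i => h_mono i (mem_toList.2 (mem_univ i)), h_near⟩

end Coloring

section HypercubeColoring

variable (f : (Fin n → Bool) → Bool) (col : (Fin n → Bool) → Fin n → Bool)

/-- `f` with, at each point `x`, marks on the decreasing edges counted by `IredCol` or `IblueCol`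
at `x`: a red edge is marked at its endpoint of value `true`, a blue one at the other endpoint. -/
noncomputable def coloredBit (x : Fin n → Bool) : MarkedBit (Fin n) :=
  ⟨f x, {i | decEdge f x i ∧ col (update x i false) i = f x}⟩

lemma sqrt_card_marks_coloredBit (x : Fin n → Bool) :
    √(#(coloredBit f col x).marks) = √(IredCol f col x) + √(IblueCol f col x) := by
  cases hx : f x <;> simp [coloredBit, IredCol, IblueCol, hx]

lemma dropsMarkedAlong_coloredBit (i : Fin n) : DropsMarkedAlong i (coloredBit f col) := by
  intro x (h₀ : f _ = true) (h₁ : f _ = false)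
  simp only [coloredBit, mem_filter_univ, decEdge, update_idem, h₀, h₁, true_and]
  exact Bool.eq_false_or_eq_true _

variable {f}

lemma distMono_le_hammingDist_div {h : (Fin n → Bool) → Bool} (hh : Monotone h) :
    distMono f ≤ hammingDist f h / 2 ^ n := by
  refine csInf_le ⟨0, ?_⟩ ⟨h, fun x y hxy => hh hxy, rfl⟩
  rintro d ⟨g, -, rfl⟩
  positivity

end HypercubeColoring

/-- robust isoperimetric inequality. For every `f` which is
`ε`-far from monotone and every red/blue coloring of the decreasing edges
(`col e i = true` means the edge along dimension `i` at lower endpoint `e`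
is red), `(1/2^n)·Σ_x √(I⁻_{f,red}(x)) + (1/2^n)·Σ_y √(I⁻_{f,blue}(y)) ≥ c·ε`. -/
theorem stmt6 : ∃ c : ℝ, 0 < c ∧ ∀ n : ℕ, 1 ≤ n → ∀ ε : ℝ, 0 < ε →
    ∀ f : (Fin n → Bool) → Bool, ε ≤ distMono f →
    ∀ col : (Fin n → Bool) → Fin n → Bool,
    c * ε ≤ (1 / 2 ^ n) * (∑ x : Fin n → Bool, Real.sqrt (IredCol f col x))
          + (1 / 2 ^ n) * (∑ y : Fin n → Bool, Real.sqrt (IblueCol f col y)) := by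
  refine ⟨1 / 3072, by norm_num, fun n _ ε _ f hε col => ?_⟩
  obtain ⟨h, h_mono, h_near⟩ := exists_monotone_hammingDist_le (dropsMarkedAlong_coloredBit f col)
  change (hammingDist f h : ℝ) ≤ _ at h_near
  have marks_eq : ∑ x, √(#(coloredBit f col x).marks) =
      ∑ x, √(IredCol f col x) + ∑ x, √(IblueCol f col x) := by
    simp only [sqrt_card_marks_coloredBit, sum_add_distrib]
  calc 1 / 3072 * ε ≤ 1 / 3072 * (hammingDist f h / 2 ^ n) := by
        gcongr
        exact hε.trans (distMono_le_hammingDist_div h_mono)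
    _ = 1 / 2 ^ n * (1 / 3072 * hammingDist f h) := by ring
    _ ≤ 1 / 2 ^ n * ∑ x, √(#(coloredBit f col x).marks) := by
        gcongr
        linarith
    _ = _ := by rw [marks_eq, mul_add]
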